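/- arXiv:2502.17738 — 2 statements merged into one kernel-verified Lean document; each statement's English description precedes it below -/
import Mathlib

section
/- Let n ∈ ℕ, let a_1, …, a_n ≥ 0, let L ≥ 0, and for each i let ψ_i : ℝ → ℝ be L-Lipschitz. Let x_1, …, x_n be points of a set Z, let g : Z → ℝ, and let 𝔉 be a nonempty set of functions Z → ℝ such that all the suprema below are finite. Then, averaging over all sign vectors σ ∈ {−1, 1}ⁿ: 2^{−n} ∑_{σ ∈ {−1,1}ⁿ} sup_{f ∈ 𝔉} |∑_{i=1}^{n} a_i σ_i (ψ_i(f(x_i)) − ψ_i(g(x_i)))| ≤ 2L · 2^{−n} ∑_{σ ∈ {−1,1}ⁿ} sup_{f ∈ 𝔉} |∑_{i=1}^{n} a_i σ_i (f(x_i) − g(x_i))|. -/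
/-!
After adjoining `g` to `𝔉`, the process `V σ f = ∑ i, a i σ_i (ψ i (f (x i)) - ψ i (g (x i)))`
vanishes at `f = g`, so `sup |V σ| ≤ sup V σ + sup V (-σ)`. Averaging over `σ`, the two terms
contribute equally, which is the origin of the factor `2`. It remains to apply the contraction
principle without absolute values (`sum_iSup_signs_le`), which replaces the coordinates of `V` one
at a time by `L` times those of the linear process. The replacement of one coordinate is
`iSup_add_iSup_le_of_contraction`: for a fixed pair of points `s, t`,
`d t + v t + d s - v s ≤ d t + d s + |u t - u s|`, and the right-hand side is at most
`sup (d + u) + sup (d - u)` whatever the sign of `u t - u s`.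

Finiteness of the intermediate suprema holds because a suitable choice of signs turns the linear
process into `∑ i, a i |f (x i) - g (x i)|`, so every coordinate is bounded on `𝔉`.
-/

/-- The real sign encoded by a Boolean. -/
def boolSign (b : Bool) : ℝ := if b then 1 else -1

lemma boolSign_not (b : Bool) : boolSign (!b) = -boolSign b := by
  cases b <;> simp [boolSign]

lemma abs_boolSign (b : Bool) : |boolSign b| = 1 := by
  cases b <;> simp [boolSign]

lemma bddAbove_range_of_abs_le {T : Type*} {h : T → ℝ} (hh : ∃ B, ∀ t, |h t| ≤ B) :
    BddAbove (Set.range h) := by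
  obtain ⟨B, hB⟩ := hh
  exact ⟨B, by rintro _ ⟨t, rfl⟩; exact (le_abs_self _).trans (hB t)⟩

lemma exists_abs_add_le {T : Type*} {h k : T → ℝ} (hh : ∃ B, ∀ t, |h t| ≤ B)
    (hk : ∃ B, ∀ t, |k t| ≤ B) : ∃ B, ∀ t, |h t + k t| ≤ B := by
  obtain ⟨B, hB⟩ := hh
  obtain ⟨C, hC⟩ := hk
  exact ⟨B + C, fun t => (abs_add_le _ _).trans (add_le_add (hB t) (hC t))⟩

lemma exists_abs_boolSign_mul_le {T : Type*} {h : T → ℝ} (b : Bool)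
    (hh : ∃ B, ∀ t, |h t| ≤ B) : ∃ B, ∀ t, |boolSign b * h t| ≤ B := by
  obtain ⟨B, hB⟩ := hh
  exact ⟨B, fun t => by rw [abs_mul, abs_boolSign, one_mul]; exact hB t⟩

lemma exists_abs_sum_boolSign_le {T : Type*} {n : ℕ} {u : Fin n → T → ℝ} (σ : Fin n → Bool)
    (hu : ∀ i, ∃ B, ∀ t, |u i t| ≤ B) : ∃ B, ∀ t, |∑ i, boolSign (σ i) * u i t| ≤ B := by
  choose B hB using hu
  refine ⟨∑ i, B i, fun t => (Finset.abs_sum_le_sum_abs _ _).trans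
    (Finset.sum_le_sum fun i _ => ?_)⟩
  rw [abs_mul, abs_boolSign, one_mul]
  exact hB i t

/-- The contraction principle for a single sign. -/
lemma iSup_add_iSup_le_of_contraction {T : Type*} [Nonempty T] {d u v : T → ℝ}
    (hd : ∃ B, ∀ t, |d t| ≤ B) (hu : ∃ B, ∀ t, |u t| ≤ B)
    (huv : ∀ s t, |v s - v t| ≤ |u s - u t|) :
    (⨆ t, (d t + boolSign true * v t)) + (⨆ t, (d t + boolSign false * v t)) ≤
      (⨆ t, (d t + boolSign true * u t)) + (⨆ t, (d t + boolSign false * u t)) := by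
  have hp := bddAbove_range_of_abs_le (exists_abs_add_le hd (exists_abs_boolSign_mul_le true hu))
  have hm := bddAbove_range_of_abs_le (exists_abs_add_le hd (exists_abs_boolSign_mul_le false hu))
  refine ciSup_add_ciSup_le fun s t => ?_
  have h1 := le_ciSup hp s
  have h2 := le_ciSup hm t
  have h3 := le_ciSup hp t
  have h4 := le_ciSup hm s
  have h5 := (le_abs_self _).trans (huv s t)
  simp only [boolSign, if_true, Bool.false_eq_true, if_false] at *
  rcases abs_cases (u s - u t) with h | h <;> linarith

/-- The contraction principle without absolute values. The offset `c` is what makes the induction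
on the number of signs work: it absorbs the coordinate that is held fixed. -/
lemma sum_iSup_signs_le {T : Type*} [Nonempty T] (n : ℕ) : ∀ (c : T → ℝ) (u v : Fin n → T → ℝ),
    (∃ B, ∀ t, |c t| ≤ B) → (∀ i, ∃ B, ∀ t, |u i t| ≤ B) → (∀ i, ∃ B, ∀ t, |v i t| ≤ B) →
    (∀ i s t, |v i s - v i t| ≤ |u i s - u i t|) →
    ∑ σ : Fin n → Bool, ⨆ t, (c t + ∑ i, boolSign (σ i) * v i t) ≤
      ∑ σ : Fin n → Bool, ⨆ t, (c t + ∑ i, boolSign (σ i) * u i t) := by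
  induction n with
  | zero => intro c u v _ _ _ _; simp
  | succ n ih =>
    intro c u v hc hu hv huv
    -- Separate the sign of the coordinate `0` from the remaining ones.
    have split : ∀ w : Fin (n + 1) → T → ℝ,
        ∑ σ : Fin (n + 1) → Bool, ⨆ t, (c t + ∑ i, boolSign (σ i) * w i t) =
        ∑ b : Bool, ∑ σ : Fin n → Bool,
          ⨆ t, (c t + boolSign b * w 0 t + ∑ i, boolSign (σ i) * w i.succ t) := by
      intro w
      rw [← (Fin.consEquiv fun _ => Bool).sum_comp, Fintype.sum_prod_type]
      simp [Fin.consEquiv, Fin.sum_univ_succ, add_assoc]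
    rw [split, split]
    calc _ ≤ ∑ b : Bool, ∑ σ : Fin n → Bool,
          ⨆ t, (c t + boolSign b * v 0 t + ∑ i, boolSign (σ i) * u i.succ t) :=
          Finset.sum_le_sum fun b _ => ih _ (fun i => u i.succ) (fun i => v i.succ)
            (exists_abs_add_le hc (exists_abs_boolSign_mul_le b (hv 0)))
            (fun i => hu _) (fun i => hv _) (fun i => huv _)
      _ ≤ _ := by
          rw [Finset.sum_comm]
          conv_rhs => rw [Finset.sum_comm]
          refine Finset.sum_le_sum fun σ _ => ?_
          simp only [Fintype.sum_bool]
          have comm : ∀ t p q, c t + p + q = c t + q + p := fun t p q => add_right_comm _ _ _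
          simp only [comm _ (boolSign _ * _ ) (∑ i, _)]
          exact iSup_add_iSup_le_of_contraction
            (exists_abs_add_le hc (exists_abs_sum_boolSign_le σ fun i => hu i.succ))
            (hu 0) (huv 0)

/-- Ledoux–Talagrand contraction for shifted Lipschitz functions: averaging over all sign
vectors `σ ∈ {−1, 1}ⁿ`,
`2⁻ⁿ ∑_σ sup_{f ∈ 𝔉} |∑ i, a_i σ_i (ψ_i(f(x_i)) − ψ_i(g(x_i)))|
  ≤ 2L · 2⁻ⁿ ∑_σ sup_{f ∈ 𝔉} |∑ i, a_i σ_i (f(x_i) − g(x_i))|`. -/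
theorem ledoux_talagrand_shifted {Z : Type*} (n : ℕ)
    (a : Fin n → ℝ) (ha : ∀ i, 0 ≤ a i) (L : ℝ) (hL : 0 ≤ L)
    (ψ : Fin n → ℝ → ℝ) (hψ_lip : ∀ i u v, |ψ i u - ψ i v| ≤ L * |u - v|)
    (x : Fin n → Z) (g : Z → ℝ)
    (𝔉 : Set (Z → ℝ)) (h𝔉 : 𝔉.Nonempty)
    (hbdd1 : ∀ σ : Fin n → Bool,
      BddAbove ((fun f : Z → ℝ =>
        |∑ i, a i * (if σ i then (1 : ℝ) else -1) * (ψ i (f (x i)) - ψ i (g (x i)))|) '' 𝔉))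
    (hbdd2 : ∀ σ : Fin n → Bool,
      BddAbove ((fun f : Z → ℝ =>
        |∑ i, a i * (if σ i then (1 : ℝ) else -1) * (f (x i) - g (x i))|) '' 𝔉)) :
    (1 / 2 ^ n) * ∑ σ : Fin n → Bool,
        sSup ((fun f : Z → ℝ =>
          |∑ i, a i * (if σ i then (1 : ℝ) else -1) * (ψ i (f (x i)) - ψ i (g (x i)))|) '' 𝔉) ≤
      2 * L * ((1 / 2 ^ n) * ∑ σ : Fin n → Bool,
        sSup ((fun f : Z → ℝ =>
          |∑ i, a i * (if σ i then (1 : ℝ) else -1) * (f (x i) - g (x i))|) '' 𝔉)) := by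
  have rw_sum : ∀ (σ : Fin n → Bool) (w : Fin n → ℝ),
      ∑ i, a i * (if σ i then (1 : ℝ) else -1) * w i = ∑ i, boolSign (σ i) * (a i * w i) :=
    fun σ w => Finset.sum_congr rfl fun i _ => by simp only [boolSign]; ring
  simp only [rw_sum _ fun i => _ - _] at hbdd1 hbdd2 ⊢
  set S : (Fin n → Bool) → ℝ := fun σ =>
    sSup ((fun f : Z → ℝ => |∑ i, boolSign (σ i) * (a i * (f (x i) - g (x i)))|) '' 𝔉) with hS
  have S_le : ∀ σ, ∀ f ∈ 𝔉, |∑ i, boolSign (σ i) * (a i * (f (x i) - g (x i)))| ≤ S σ :=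
    fun σ f hf => le_csSup (hbdd2 σ) ⟨f, hf, rfl⟩
  have S_nonneg : ∀ σ, 0 ≤ S σ := by
    obtain ⟨f, hf⟩ := h𝔉
    exact fun σ => (abs_nonneg _).trans (S_le σ f hf)
  let T := {f : Z → ℝ // f ∈ insert g 𝔉}
  let t₀ : T := ⟨g, Set.mem_insert _ _⟩
  have : Nonempty T := ⟨t₀⟩
  let u : Fin n → T → ℝ := fun i f => L * (a i * (f.1 (x i) - g (x i)))
  let v : Fin n → T → ℝ := fun i f => a i * (ψ i (f.1 (x i)) - ψ i (g (x i)))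
  have u_zero : ∀ i, u i t₀ = 0 := fun i => by simp [u, t₀]
  have v_zero : ∀ i, v i t₀ = 0 := fun i => by simp [v, t₀]
  have huv : ∀ i s t, |v i s - v i t| ≤ |u i s - u i t| := by
    intro i s t
    have h1 : v i s - v i t = a i * (ψ i (s.1 (x i)) - ψ i (t.1 (x i))) := by simp only [v]; ring
    have h2 : u i s - u i t = a i * (L * (s.1 (x i) - t.1 (x i))) := by simp only [u]; ring
    rw [h1, h2, abs_mul, abs_mul, abs_mul, abs_of_nonneg hL]
    exact mul_le_mul_of_nonneg_left (hψ_lip i _ _) (abs_nonneg _)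
  have U_le : ∀ (σ : Fin n → Bool) (t : T), |∑ i, boolSign (σ i) * u i t| ≤ L * S σ := by
    rintro σ ⟨f, rfl | hf⟩
    · simpa [u] using mul_nonneg hL (S_nonneg σ)
    · have : ∑ i, boolSign (σ i) * u i ⟨f, Or.inr hf⟩ =
          L * ∑ i, boolSign (σ i) * (a i * (f (x i) - g (x i))) := by
        rw [Finset.mul_sum]
        exact Finset.sum_congr rfl fun i _ => by simp only [u]; ring
      rw [this, abs_mul, abs_of_nonneg hL]
      exact mul_le_mul_of_nonneg_left (S_le σ f hf) hL
  have hu : ∀ i, ∃ B, ∀ t, |u i t| ≤ B := by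
    refine fun i => ⟨∑ σ, L * S σ, fun t => ?_⟩
    -- With the signs of the `u j t`, the sum bounded in `U_le` equals `∑ j, |u j t|`.
    let τ : Fin n → Bool := fun j => decide (0 ≤ u j t)
    have hτ : ∀ j, boolSign (τ j) * u j t = |u j t| := by
      intro j
      by_cases h : 0 ≤ u j t
      · simp [τ, boolSign, h, abs_of_nonneg h]
      · simp [τ, boolSign, h, abs_of_neg (not_le.mp h)]
    calc |u i t| ≤ ∑ j, |u j t| :=
          Finset.single_le_sum (f := fun j => |u j t|) (fun j _ => abs_nonneg _)
            (Finset.mem_univ i)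
      _ = ∑ j, boolSign (τ j) * u j t := by simp only [hτ]
      _ ≤ L * S τ := (le_abs_self _).trans (U_le τ t)
      _ ≤ ∑ σ, L * S σ :=
          Finset.single_le_sum (f := fun σ => L * S σ)
            (fun σ _ => mul_nonneg hL (S_nonneg σ)) (Finset.mem_univ τ)
  have hv : ∀ i, ∃ B, ∀ t, |v i t| ≤ B := by
    intro i
    obtain ⟨B, hB⟩ := hu i
    refine ⟨B, fun t => le_trans ?_ (hB t)⟩
    simpa [u_zero, v_zero] using huv i t t₀
  have key := sum_iSup_signs_le n (fun _ : T => 0) u v ⟨0, by simp⟩ hu hv huv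
  simp only [zero_add] at key
  set V : (Fin n → Bool) → ℝ := fun σ => ⨆ t, ∑ i, boolSign (σ i) * v i t with hV
  have le_V : ∀ σ t, ∑ i, boolSign (σ i) * v i t ≤ V σ := fun σ t =>
    le_ciSup (bddAbove_range_of_abs_le (exists_abs_sum_boolSign_le σ hv)) t
  have V_nonneg : ∀ σ, 0 ≤ V σ := fun σ => by simpa [v_zero] using le_V σ t₀
  have abs_le : ∀ σ : Fin n → Bool,
      sSup ((fun f : Z → ℝ =>
        |∑ i, boolSign (σ i) * (a i * (ψ i (f (x i)) - ψ i (g (x i))))|) '' 𝔉) ≤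
      V σ + V (fun i => !σ i) := by
    intro σ
    refine csSup_le (h𝔉.image _) ?_
    rintro _ ⟨f, hf, rfl⟩
    have h1 := le_V σ ⟨f, Or.inr hf⟩
    have h2 := le_V (fun i => !σ i) ⟨f, Or.inr hf⟩
    simp only [boolSign_not, neg_mul, Finset.sum_neg_distrib] at h2
    have h3 := V_nonneg σ
    have h4 := V_nonneg (fun i => !σ i)
    exact abs_le.mpr ⟨by simp only [v] at *; linarith, by simp only [v] at *; linarith⟩
  have flip : ∑ σ : Fin n → Bool, V (fun i => !σ i) = ∑ σ, V σ :=
    (Equiv.arrowCongr (Equiv.refl (Fin n)) Equiv.boolNot).sum_comp V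
  have hU : ∑ σ : Fin n → Bool, ⨆ t, ∑ i, boolSign (σ i) * u i t ≤ ∑ σ, L * S σ :=
    Finset.sum_le_sum fun σ _ => ciSup_le fun t => (le_abs_self _).trans (U_le σ t)
  have total := Finset.sum_le_sum fun σ (_ : σ ∈ (Finset.univ : Finset (Fin n → Bool))) => abs_le σ
  rw [Finset.sum_add_distrib, flip] at total
  rw [← Finset.mul_sum] at hU
  rw [mul_left_comm]
  exact mul_le_mul_of_nonneg_left (by linarith) (by positivity)
end

section
/- For every positive integer d and every σ > 0 there exists a constant C > 0 (depending only on d and σ) with the following property. Let M ≥ 2 be an integer and let μ, ν be Borel probability measures on ℝ^d supported in [−π, π]^d whose mixed moments agree up to degree 2M in each coordinate, i.e. ∫ y_1^{k_1} ⋯ y_d^{k_d} dμ(y) = ∫ y_1^{k_1} ⋯ y_d^{k_d} dν(y) for all integers 0 ≤ k_1, …, k_d ≤ 2M. Then for every x ∈ ℝ^d: | ∑_{k ∈ ℤ^d} ( ∫ e^{−‖x − y − 2πk‖²/(2σ²)} dμ(y) − ∫ e^{−‖x − y − 2πk‖²/(2σ²)} dν(y) ) | ≤ 2 (C e² log M /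 (M+1))^{(M+1)/2}. -/
/-!
Write `a = x - 2πk`. Then `exp (-‖a - y‖² / (2σ²)) = exp (-‖a‖² / (2σ²)) * exp z` with
`z = (⟨a, y⟩ - ‖y‖² / 2) / σ²`, a polynomial of total degree two in `y`. Truncating the exponential
series of `exp z` after the power `z ^ M` gives a polynomial in `y` of degree at most `2M`, which
has the same integral against `μ` and `ν`; only the truncation error matters
(`abs_integral_sub_le`).

With `n = M + 1`, the tail of the exponential series is at most `exp (L * |z|) / L ^ n` for every
`L ≥ 1` (`abs_exp_sub_sum_le`). For `L = √n` and `|y i| ≤ π`, completing the square trades half of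
the Gaussian weight for a factor `K ^ n`, so the error is at most
`exp (-‖a‖² / (4σ²)) * (K / √n) ^ n` (`abs_gaussian_sub_poly_le`). The remaining Gaussians sum over
the lattice to a constant independent of `x` (`exists_lattice_sum_bound`), and the constants,
as well as the factor `exp 2 * log M ≥ 1 / 2`, are absorbed into `C`.
-/

open MeasureTheory Real

/-! ### The tail of the exponential series -/

lemma exp_sub_sum_le {L t : ℝ} (hL : 1 ≤ L) (ht : 0 ≤ t) (n : ℕ) :
    Real.exp t - ∑ m ∈ Finset.range n, t ^ m / m.factorial ≤ Real.exp (L * t) / L ^ n := by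
  have hL0 : 0 < L := by linarith
  have hasum : ∀ u : ℝ, HasSum (fun m : ℕ => u ^ m / m.factorial) (Real.exp u) := fun u => by
    rw [Real.exp_eq_exp_ℝ]
    exact NormedSpace.expSeries_div_hasSum_exp u
  have h1 := (hasSum_nat_add_iff' n).2 (hasum t)
  have h2 := (hasSum_nat_add_iff' n).2 (hasum (L * t))
  have h3 : L ^ n * (Real.exp t - ∑ m ∈ Finset.range n, t ^ m / m.factorial) ≤
      Real.exp (L * t) - ∑ m ∈ Finset.range n, (L * t) ^ m / m.factorial := by
    refine hasSum_le (fun m => ?_) (h1.mul_left (L ^ n)) h2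
    rw [mul_pow, ← mul_div_assoc]
    gcongr
    omega
  have h4 : 0 ≤ ∑ m ∈ Finset.range n, (L * t) ^ m / m.factorial :=
    Finset.sum_nonneg fun m _ => by positivity
  rw [le_div_iff₀ (by positivity)]
  linarith

lemma abs_exp_sub_sum_le {L : ℝ} (hL : 1 ≤ L) (z : ℝ) (n : ℕ) :
    |Real.exp z - ∑ m ∈ Finset.range n, z ^ m / m.factorial| ≤ Real.exp (L * |z|) / L ^ n := by
  refine le_trans ?_ (exp_sub_sum_le hL (abs_nonneg z) n)
  have h := Complex.norm_exp_sub_sum_le_exp_norm_sub_sum (z : ℂ) n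
  rw [Complex.norm_real, Real.norm_eq_abs] at h
  rw [← Real.norm_eq_abs, ← Complex.norm_real]
  push_cast
  exact h

/-! ### Polynomial approximation of a shifted Gaussian -/

/-- The polynomial `(⟨a, y⟩ - ‖y‖² / 2) / σ²` in `y`, the exponent left after the factor
`exp (-‖a‖² / (2σ²))` is split off from `exp (-‖a - y‖² / (2σ²))`. -/
noncomputable def exponentPoly {d : ℕ} (σ : ℝ) (a : Fin d → ℝ) : MvPolynomial (Fin d) ℝ :=
  ∑ i, (MvPolynomial.C (a i / σ ^ 2) * MvPolynomial.X i -
    MvPolynomial.C (1 / (2 * σ ^ 2)) * MvPolynomial.X i ^ 2)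

/-- The exponential series at `exponentPoly σ a`, truncated to its first `n` terms. -/
noncomputable def taylorPoly {d : ℕ} (σ : ℝ) (a : Fin d → ℝ) (n : ℕ) : MvPolynomial (Fin d) ℝ :=
  ∑ m ∈ Finset.range n, MvPolynomial.C ((m.factorial : ℝ)⁻¹) * exponentPoly σ a ^ m

lemma eval_exponentPoly {d : ℕ} (σ : ℝ) (a y : Fin d → ℝ) :
    MvPolynomial.eval y (exponentPoly σ a) =
      ∑ i, (a i / σ ^ 2 * y i - 1 / (2 * σ ^ 2) * y i ^ 2) := by
  simp [exponentPoly, map_sum]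

lemma eval_taylorPoly {d : ℕ} (σ : ℝ) (a y : Fin d → ℝ) (n : ℕ) :
    MvPolynomial.eval y (taylorPoly σ a n) =
      ∑ m ∈ Finset.range n, (MvPolynomial.eval y (exponentPoly σ a)) ^ m / m.factorial := by
  simp only [taylorPoly, map_sum, map_mul, map_pow, MvPolynomial.eval_C]
  exact Finset.sum_congr rfl fun m _ => by ring

lemma totalDegree_exponentPoly_le {d : ℕ} (σ : ℝ) (a : Fin d → ℝ) :
    (exponentPoly σ a).totalDegree ≤ 2 := by
  refine MvPolynomial.totalDegree_finsetSum_le fun i _ => ?_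
  refine (MvPolynomial.totalDegree_sub _ _).trans (max_le ?_ ?_)
  · refine (MvPolynomial.totalDegree_mul _ _).trans ?_
    simp
  · refine (MvPolynomial.totalDegree_mul _ _).trans ?_
    rw [MvPolynomial.totalDegree_C, zero_add, MvPolynomial.totalDegree_X_pow]

lemma totalDegree_taylorPoly_le {d : ℕ} (σ : ℝ) (a : Fin d → ℝ) (M : ℕ) :
    (taylorPoly σ a (M + 1)).totalDegree ≤ 2 * M := by
  refine MvPolynomial.totalDegree_finsetSum_le fun m hm => ?_
  refine (MvPolynomial.totalDegree_mul _ _).trans ?_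
  rw [MvPolynomial.totalDegree_C, zero_add]
  refine (MvPolynomial.totalDegree_pow _ _).trans ?_
  have := totalDegree_exponentPoly_le σ a
  have hm' : m ≤ M := by simpa [Nat.lt_succ_iff] using hm
  nlinarith

lemma abs_gaussian_sub_poly_le {d : ℕ} {σ : ℝ} (hσ : 0 < σ) (a y : Fin d → ℝ)
    (hy : ∀ i, |y i| ≤ π) {n : ℕ} (hn : 1 ≤ n) :
    |Real.exp (-(∑ i, (a i - y i) ^ 2) / (2 * σ ^ 2)) -
        Real.exp (-(∑ i, a i ^ 2) / (2 * σ ^ 2)) * MvPolynomial.eval y (taylorPoly σ a n)| ≤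
      Real.exp (-(∑ i, a i ^ 2) / (4 * σ ^ 2)) *
        (Real.exp (2 * d * π ^ 2 / σ ^ 2) / √n) ^ n := by
  have hn' : (1 : ℝ) ≤ n := by exact_mod_cast hn
  have hL : 1 ≤ √(n : ℝ) := Real.one_le_sqrt.2 hn'
  have hLL : √(n : ℝ) ^ 2 = n := Real.sq_sqrt (by linarith)
  set L := √(n : ℝ) with hLdef
  set z := MvPolynomial.eval y (exponentPoly σ a) with hz
  have hsplit : Real.exp (-(∑ i, (a i - y i) ^ 2) / (2 * σ ^ 2)) =
      Real.exp (-(∑ i, a i ^ 2) / (2 * σ ^ 2)) * Real.exp z := by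
    rw [← Real.exp_add, hz, eval_exponentPoly, neg_div, neg_div, Finset.sum_div, Finset.sum_div,
      ← Finset.sum_neg_distrib, ← Finset.sum_neg_distrib, ← Finset.sum_add_distrib]
    congr 1
    refine Finset.sum_congr rfl fun i _ => ?_
    field_simp
    ring
  -- completing the square: `L π |a i| ≤ (a i)² / 4 + L² π²`
  have hzb : L * |z| ≤ (∑ i, a i ^ 2) / (4 * σ ^ 2) + n * (2 * d * π ^ 2 / σ ^ 2) := by
    have hterm : ∀ i, L * |a i / σ ^ 2 * y i - 1 / (2 * σ ^ 2) * y i ^ 2| ≤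
        a i ^ 2 / (4 * σ ^ 2) + n * (2 * π ^ 2 / σ ^ 2) := by
      intro i
      have e1 : a i / σ ^ 2 * y i - 1 / (2 * σ ^ 2) * y i ^ 2 =
          (a i * y i - y i ^ 2 / 2) / σ ^ 2 := by field_simp
      have e2 : a i ^ 2 / (4 * σ ^ 2) + n * (2 * π ^ 2 / σ ^ 2) =
          (a i ^ 2 / 4 + n * (2 * π ^ 2)) / σ ^ 2 := by field_simp
      rw [e1, e2, abs_div, abs_of_pos (by positivity : 0 < σ ^ 2), ← mul_div_assoc]
      gcongr
      have h1 : |a i * y i - y i ^ 2 / 2| ≤ |a i| * π + π ^ 2 / 2 := by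
        refine (abs_sub _ _).trans ?_
        rw [abs_mul, abs_div, abs_pow, abs_two]
        gcongr <;> exact hy i
      calc L * |a i * y i - y i ^ 2 / 2| ≤ L * (|a i| * π + π ^ 2 / 2) := by gcongr
        _ ≤ a i ^ 2 / 4 + n * (2 * π ^ 2) := by
          rw [← hLL, ← sq_abs (a i)]
          nlinarith [sq_nonneg (|a i| / 2 - L * π), mul_nonneg (sq_nonneg π) (sub_nonneg.2 hL),
            mul_nonneg (mul_nonneg (sq_nonneg π) (sub_nonneg.2 hL)) (by linarith : 0 ≤ L)]
    calc L * |z| ≤ L * ∑ i, |a i / σ ^ 2 * y i - 1 / (2 * σ ^ 2) * y i ^ 2| := by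
          rw [hz, eval_exponentPoly]
          gcongr
          exact Finset.abs_sum_le_sum_abs _ _
      _ ≤ ∑ i, (a i ^ 2 / (4 * σ ^ 2) + n * (2 * π ^ 2 / σ ^ 2)) := by
          rw [Finset.mul_sum]
          exact Finset.sum_le_sum fun i _ => hterm i
      _ = _ := by
          rw [Finset.sum_add_distrib, Finset.sum_div]
          simp
          ring
  rw [hsplit, ← mul_sub, abs_mul, abs_of_pos (Real.exp_pos _), eval_taylorPoly]
  calc _ ≤ Real.exp (-(∑ i, a i ^ 2) / (2 * σ ^ 2)) * (Real.exp (L * |z|) / L ^ n) := by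
        gcongr
        exact abs_exp_sub_sum_le hL z n
    _ ≤ Real.exp (-(∑ i, a i ^ 2) / (2 * σ ^ 2)) *
        (Real.exp ((∑ i, a i ^ 2) / (4 * σ ^ 2) + n * (2 * d * π ^ 2 / σ ^ 2)) / L ^ n) := by
        gcongr
    _ = _ := by
        rw [div_pow, ← Real.exp_nat_mul, mul_div_assoc', mul_div_assoc' (Real.exp _),
          ← Real.exp_add, ← Real.exp_add]
        congr 2
        field_simp
        ring

/-! ### Integrals of polynomials and Gaussians -/

lemma integrable_monomial {d : ℕ} {μ : Measure (Fin d → ℝ)} [IsProbabilityMeasure μ]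
    (hμ : ∀ᵐ y ∂μ, ∀ i, |y i| ≤ π) (k : Fin d → ℕ) :
    Integrable (fun y => ∏ i, (y i) ^ (k i)) μ := by
  refine Integrable.of_bound (C := ∏ i, π ^ (k i)) ?_ ?_
  · exact (by fun_prop : Continuous fun y : Fin d → ℝ => ∏ i, (y i) ^ (k i)).aestronglyMeasurable
  · filter_upwards [hμ] with y hy
    rw [Real.norm_eq_abs, Finset.abs_prod]
    refine Finset.prod_le_prod (fun i _ => abs_nonneg _) fun i _ => ?_
    rw [abs_pow]
    gcongr
    exact hy i

lemma integrable_eval {d : ℕ} {μ : Measure (Fin d → ℝ)} [IsProbabilityMeasure μ]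
    (hμ : ∀ᵐ y ∂μ, ∀ i, |y i| ≤ π) (p : MvPolynomial (Fin d) ℝ) :
    Integrable (fun y => MvPolynomial.eval y p) μ := by
  simp only [MvPolynomial.eval_eq']
  exact integrable_finsetSum _ fun s _ => (integrable_monomial hμ s).const_mul _

lemma integral_eval {d : ℕ} {μ : Measure (Fin d → ℝ)} [IsProbabilityMeasure μ]
    (hμ : ∀ᵐ y ∂μ, ∀ i, |y i| ≤ π) (p : MvPolynomial (Fin d) ℝ) :
    ∫ y, MvPolynomial.eval y p ∂μ = ∑ s ∈ p.support, p.coeff s * ∫ y, ∏ i, (y i) ^ (s i) ∂μ := by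
  simp only [MvPolynomial.eval_eq']
  rw [integral_finsetSum p.support fun s _ => (integrable_monomial hμ s).const_mul (p.coeff s)]
  simp only [integral_const_mul]

lemma integrable_gaussian {d : ℕ} {μ : Measure (Fin d → ℝ)} [IsProbabilityMeasure μ]
    (σ : ℝ) (a : Fin d → ℝ) :
    Integrable (fun y => Real.exp (-(∑ i, (a i - y i) ^ 2) / (2 * σ ^ 2))) μ := by
  refine Integrable.of_bound (C := 1) ?_ ?_
  · exact (by fun_prop : Continuous fun y : Fin d → ℝ =>
      Real.exp (-(∑ i, (a i - y i) ^ 2) / (2 * σ ^ 2))).aestronglyMeasurable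
  · refine Filter.Eventually.of_forall fun y => ?_
    rw [Real.norm_eq_abs, Real.abs_exp, Real.exp_le_one_iff, neg_div, neg_nonpos]
    have : 0 ≤ ∑ i, (a i - y i) ^ 2 := Finset.sum_nonneg fun i _ => sq_nonneg _
    positivity

lemma abs_integral_gaussian_sub_le {d : ℕ} {μ : Measure (Fin d → ℝ)} [IsProbabilityMeasure μ]
    (hμ : ∀ᵐ y ∂μ, ∀ i, |y i| ≤ π) {σ : ℝ} (hσ : 0 < σ) (a : Fin d → ℝ) {n : ℕ} (hn : 1 ≤ n) :
    |(∫ y, Real.exp (-(∑ i, (a i - y i) ^ 2) / (2 * σ ^ 2)) ∂μ) -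
        Real.exp (-(∑ i, a i ^ 2) / (2 * σ ^ 2)) *
          ∫ y, MvPolynomial.eval y (taylorPoly σ a n) ∂μ| ≤
      Real.exp (-(∑ i, a i ^ 2) / (4 * σ ^ 2)) *
        (Real.exp (2 * d * π ^ 2 / σ ^ 2) / √n) ^ n := by
  rw [← integral_const_mul,
    ← integral_sub (integrable_gaussian σ a) ((integrable_eval hμ _).const_mul _),
    ← Real.norm_eq_abs]
  have h := norm_integral_le_of_norm_le_const (μ := μ) (hμ.mono fun y hy =>
    (Real.norm_eq_abs _).trans_le (abs_gaussian_sub_poly_le hσ a y hy hn))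
  simpa using h

/-- Matching moments cancel the polynomial part, leaving twice the truncation error. -/
lemma abs_integral_sub_le {d : ℕ} {μ ν : Measure (Fin d → ℝ)} [IsProbabilityMeasure μ]
    [IsProbabilityMeasure ν] (hμ : ∀ᵐ y ∂μ, ∀ i, |y i| ≤ π) (hν : ∀ᵐ y ∂ν, ∀ i, |y i| ≤ π)
    {M : ℕ} (hmom : ∀ k : Fin d → ℕ, (∀ i, k i ≤ 2 * M) →
      ∫ y, ∏ i, (y i) ^ (k i) ∂μ = ∫ y, ∏ i, (y i) ^ (k i) ∂ν)
    {σ : ℝ} (hσ : 0 < σ) (a : Fin d → ℝ) :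
    |(∫ y, Real.exp (-(∑ i, (a i - y i) ^ 2) / (2 * σ ^ 2)) ∂μ) -
        ∫ y, Real.exp (-(∑ i, (a i - y i) ^ 2) / (2 * σ ^ 2)) ∂ν| ≤
      Real.exp (-(∑ i, a i ^ 2) / (4 * σ ^ 2)) *
        (2 * (Real.exp (2 * d * π ^ 2 / σ ^ 2) / √((M + 1 : ℕ) : ℝ)) ^ (M + 1)) := by
  have h1 := abs_integral_gaussian_sub_le hμ hσ a (Nat.le_add_left 1 M)
  have h2 := abs_integral_gaussian_sub_le hν hσ a (Nat.le_add_left 1 M)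
  have h3 : ∫ y, MvPolynomial.eval y (taylorPoly σ a (M + 1)) ∂μ =
      ∫ y, MvPolynomial.eval y (taylorPoly σ a (M + 1)) ∂ν := by
    rw [integral_eval hμ, integral_eval hν]
    refine Finset.sum_congr rfl fun s hs => ?_
    rw [hmom s fun i => ?_]
    exact (MvPolynomial.monomial_le_degreeOf i hs).trans
      ((MvPolynomial.degreeOf_le_totalDegree _ i).trans (totalDegree_taylorPoly_le σ a M))
  rw [h3] at h1
  rw [abs_le] at h1 h2 ⊢
  constructor <;> linarith [h1.1, h1.2, h2.1, h2.2]

/-! ### Lattice sums of Gaussians -/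

lemma summable_exp_neg_abs {b : ℝ} (hb : 0 < b) :
    Summable fun j : ℤ => Real.exp (-b * |(j : ℝ)|) := by
  have h : Summable fun n : ℕ => Real.exp (-b * (n : ℝ)) := by
    simpa [mul_comm] using Real.summable_exp_nat_mul_iff.2 (neg_lt_zero.2 hb)
  refine Summable.of_nat_of_neg ?_ ?_ <;> simpa using h

/-- The bound is uniform in `u`: translating by the integer nearest to `u / (2π)` reduces to
`|u| ≤ π`, where `|u - 2πj| ≥ π|j|`. -/
lemma exists_sum_bound {c : ℝ} (hc : 0 < c) :
    ∃ S : ℝ, 1 ≤ S ∧ ∀ (u : ℝ) (s : Finset ℤ),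
      ∑ j ∈ s, Real.exp (-(u - 2 * π * (j : ℝ)) ^ 2 / c) ≤ S := by
  have hb : 0 < π ^ 2 / c := by positivity
  have hsum := summable_exp_neg_abs hb
  refine ⟨max 1 (∑' j : ℤ, Real.exp (-(π ^ 2 / c) * |(j : ℝ)|)), le_max_left _ _,
    fun u s => le_trans ?_ (le_max_right _ _)⟩
  set m : ℤ := round (u / (2 * π)) with hm
  have hr : |u - 2 * π * m| ≤ π := by
    have h := abs_sub_round (u / (2 * π))
    rw [← hm] at h
    have e : u - 2 * π * m = 2 * π * (u / (2 * π) - m) := by field_simp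
    rw [e, abs_mul, abs_of_pos Real.two_pi_pos]
    nlinarith [Real.pi_pos]
  have hterm : ∀ j : ℤ, Real.exp (-(u - 2 * π * (j : ℝ)) ^ 2 / c) ≤
      Real.exp (-(π ^ 2 / c) * |((j - m : ℤ) : ℝ)|) := by
    intro j
    rw [Real.exp_le_exp, neg_div, neg_mul, neg_le_neg_iff, div_mul_eq_mul_div]
    gcongr
    rcases eq_or_ne (j - m) 0 with h0 | h0
    · rw [h0]
      simp [sq_nonneg]
    · have h1 : (1 : ℝ) ≤ |((j - m : ℤ) : ℝ)| := by exact_mod_cast Int.one_le_abs h0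
      have h2 : 2 * π * |((j - m : ℤ) : ℝ)| ≤ |u - 2 * π * m| + |u - 2 * π * j| := by
        rw [← abs_of_pos Real.two_pi_pos, ← abs_mul, abs_of_pos Real.two_pi_pos]
        refine le_trans (le_of_eq ?_) (abs_sub _ _)
        push_cast
        ring_nf
      have h3 : π * |((j - m : ℤ) : ℝ)| ≤ |u - 2 * π * j| := by nlinarith [Real.pi_pos]
      rw [← sq_abs (u - 2 * π * j)]
      calc π ^ 2 * |((j - m : ℤ) : ℝ)| ≤ (π * |((j - m : ℤ) : ℝ)|) ^ 2 := by
            rw [mul_pow]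
            gcongr
            nlinarith
        _ ≤ _ := by gcongr
  have hsum' : Summable fun j : ℤ => Real.exp (-(π ^ 2 / c) * |((j - m : ℤ) : ℝ)|) :=
    (Equiv.subRight m).summable_iff.2 hsum
  calc _ ≤ ∑ j ∈ s, Real.exp (-(π ^ 2 / c) * |((j - m : ℤ) : ℝ)|) :=
        Finset.sum_le_sum fun j _ => hterm j
    _ ≤ ∑' j : ℤ, Real.exp (-(π ^ 2 / c) * |((j - m : ℤ) : ℝ)|) :=
        hsum'.sum_le_tsum _ fun j _ => (Real.exp_pos _).le
    _ = _ := (Equiv.subRight m).tsum_eq fun j : ℤ => Real.exp (-(π ^ 2 / c) * |(j : ℝ)|)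

/-- A finite set of lattice points lies in a box, over which the Gaussian sum factorizes. -/
lemma exists_lattice_sum_bound (d : ℕ) {c : ℝ} (hc : 0 < c) :
    ∃ T : ℝ, 1 ≤ T ∧ ∀ (x : Fin d → ℝ) (s : Finset (Fin d → ℤ)),
      ∑ k ∈ s, Real.exp (-(∑ i, (x i - 2 * π * (k i : ℝ)) ^ 2) / c) ≤ T := by
  obtain ⟨S, hS1, hS⟩ := exists_sum_bound hc
  refine ⟨S ^ d, one_le_pow₀ hS1, fun x s => ?_⟩
  have hfac : ∀ k : Fin d → ℤ, Real.exp (-(∑ i, (x i - 2 * π * (k i : ℝ)) ^ 2) / c) =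
      ∏ i, Real.exp (-(x i - 2 * π * (k i : ℝ)) ^ 2 / c) := by
    intro k
    rw [← Real.exp_sum, ← Finset.sum_div, Finset.sum_neg_distrib]
  simp only [hfac]
  calc _ ≤ ∑ k ∈ Fintype.piFinset fun i => s.image fun k : Fin d → ℤ => k i,
        ∏ i, Real.exp (-(x i - 2 * π * (k i : ℝ)) ^ 2 / c) := by
        refine Finset.sum_le_sum_of_subset_of_nonneg (fun k hk => ?_) fun k _ _ => by positivity
        exact Fintype.mem_piFinset.2 fun i => Finset.mem_image_of_mem (fun k => k i) hk
    _ = ∏ i, ∑ j ∈ s.image fun k : Fin d → ℤ => k i, Real.exp (-(x i - 2 * π * (j : ℝ)) ^ 2 / c) :=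
        (Finset.prod_univ_sum _ fun i (j : ℤ) =>
          Real.exp (-(x i - 2 * π * (j : ℝ)) ^ 2 / c)).symm
    _ ≤ ∏ _i : Fin d, S :=
        Finset.prod_le_prod (fun i _ => Finset.sum_nonneg fun j _ => (Real.exp_pos _).le)
          fun i _ => hS _ _
    _ = S ^ d := by simp

/-- The prefactor `T` and the constant `K` are absorbed by `C = 2 (T K)²`. -/
lemma absorb_constants {T K : ℝ} (hT : 1 ≤ T) (hK : 0 < K) {M : ℕ} (hM : 2 ≤ M) :
    T * (K / √((M + 1 : ℕ) : ℝ)) ^ (M + 1) ≤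
      (2 * (T * K) ^ 2 * Real.exp 2 * Real.log M / ((M : ℝ) + 1)) ^ (((M : ℝ) + 1) / 2) := by
  have hlog : 1 / 2 ≤ Real.log M := by
    have h1 : Real.log 2 ≤ Real.log M := Real.log_le_log (by norm_num) (by exact_mod_cast hM)
    linarith [Real.log_two_gt_d9]
  have hexp : 1 ≤ Real.exp 2 := Real.one_le_exp (by norm_num)
  have hTK : 0 < T * K := by positivity
  have hprod : 1 ≤ 2 * (Real.exp 2 * Real.log M) := by nlinarith
  rw [Real.rpow_div_two_eq_sqrt _ (by positivity), ← Nat.cast_add_one, Real.rpow_natCast]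
  calc T * (K / √((M + 1 : ℕ) : ℝ)) ^ (M + 1)
      ≤ T ^ (M + 1) * (K / √((M + 1 : ℕ) : ℝ)) ^ (M + 1) := by
        gcongr
        exact le_self_pow₀ hT (by omega)
    _ = (T * K / √((M + 1 : ℕ) : ℝ)) ^ (M + 1) := by rw [← mul_pow, mul_div_assoc]
    _ ≤ _ := by
        gcongr
        rw [Real.sqrt_div' _ (by positivity)]
        gcongr
        refine Real.le_sqrt_of_sq_le ?_
        nlinarith [mul_le_mul_of_nonneg_left hprod (sq_nonneg (T * K))]

/-- Moment-matching bound for periodized Gaussians: for every `d ≥ 1` and `σ > 0` there is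
`C > 0` such that, for every `M ≥ 2` and all Borel probability measures `μ, ν` on `ℝ^d`
supported in `[−π, π]^d` whose mixed moments agree up to degree `2M` in each coordinate,
for every `x ∈ ℝ^d`,
`|∑_{k ∈ ℤ^d} (∫ e^{−‖x−y−2πk‖²/(2σ²)} dμ(y) − ∫ e^{−‖x−y−2πk‖²/(2σ²)} dν(y))|
  ≤ 2 (C e² log M/(M+1))^{(M+1)/2}`. -/
theorem moment_matching_periodized_gaussian_bound (d : ℕ) (hd : 0 < d) (σ : ℝ)
    (hσ : 0 < σ) :
    ∃ C : ℝ, 0 < C ∧ ∀ M : ℕ, 2 ≤ M →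
      ∀ μ ν : Measure (Fin d → ℝ), IsProbabilityMeasure μ → IsProbabilityMeasure ν →
        μ {y | ¬ ∀ i, |y i| ≤ π} = 0 → ν {y | ¬ ∀ i, |y i| ≤ π} = 0 →
        (∀ k : Fin d → ℕ, (∀ i, k i ≤ 2 * M) →
          ∫ y, ∏ i, (y i) ^ (k i) ∂μ = ∫ y, ∏ i, (y i) ^ (k i) ∂ν) →
        ∀ x : Fin d → ℝ,
          Summable (fun k : Fin d → ℤ =>
            (∫ y, Real.exp (-(∑ i, (x i - y i - 2 * π * (k i : ℝ)) ^ 2) / (2 * σ ^ 2)) ∂μ) -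
              ∫ y, Real.exp (-(∑ i, (x i - y i - 2 * π * (k i : ℝ)) ^ 2) / (2 * σ ^ 2)) ∂ν) ∧
          |∑' k : Fin d → ℤ,
              ((∫ y, Real.exp (-(∑ i, (x i - y i - 2 * π * (k i : ℝ)) ^ 2) / (2 * σ ^ 2)) ∂μ) -
                ∫ y, Real.exp (-(∑ i, (x i - y i - 2 * π * (k i : ℝ)) ^ 2) / (2 * σ ^ 2)) ∂ν)| ≤
            2 * (C * Real.exp 2 * Real.log M / ((M : ℝ) + 1)) ^ (((M : ℝ) + 1) / 2) := by
  obtain ⟨T, hT1, hT⟩ := exists_lattice_sum_bound d (by positivity : 0 < 4 * σ ^ 2)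
  have hK := Real.exp_pos (2 * d * π ^ 2 / σ ^ 2)
  refine ⟨2 * (T * Real.exp (2 * d * π ^ 2 / σ ^ 2)) ^ 2, by positivity, ?_⟩
  intro M hM μ ν hμp hνp hμ hν hmom x
  have hμ' : ∀ᵐ y ∂μ, ∀ i, |y i| ≤ π := ae_iff.2 hμ
  have hν' : ∀ᵐ y ∂ν, ∀ i, |y i| ≤ π := ae_iff.2 hν
  set B := 2 * (Real.exp (2 * d * π ^ 2 / σ ^ 2) / √((M + 1 : ℕ) : ℝ)) ^ (M + 1) with hB
  have hterm : ∀ k : Fin d → ℤ,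
      ‖(∫ y, Real.exp (-(∑ i, (x i - y i - 2 * π * (k i : ℝ)) ^ 2) / (2 * σ ^ 2)) ∂μ) -
        ∫ y, Real.exp (-(∑ i, (x i - y i - 2 * π * (k i : ℝ)) ^ 2) / (2 * σ ^ 2)) ∂ν‖ ≤
      Real.exp (-(∑ i, (x i - 2 * π * (k i : ℝ)) ^ 2) / (4 * σ ^ 2)) * B := by
    intro k
    rw [Real.norm_eq_abs]
    have hcomm : ∀ (y : Fin d → ℝ) (i : Fin d), x i - y i - 2 * π * (k i : ℝ) =
        x i - 2 * π * (k i : ℝ) - y i := fun y i => by ring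
    simp only [hcomm]
    exact abs_integral_sub_le hμ' hν' hmom hσ fun i => x i - 2 * π * (k i : ℝ)
  have hg : Summable fun k : Fin d → ℤ =>
      Real.exp (-(∑ i, (x i - 2 * π * (k i : ℝ)) ^ 2) / (4 * σ ^ 2)) :=
    summable_of_sum_le (fun k => (Real.exp_pos _).le) (hT x)
  refine ⟨Summable.of_norm_bounded (hg.mul_right B) hterm, ?_⟩
  rw [← Real.norm_eq_abs]
  refine (tsum_of_norm_bounded (hg.mul_right B).hasSum hterm).trans ?_
  rw [tsum_mul_right]
  calc _ ≤ T * B := by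
        gcongr
        exact hg.tsum_le_of_sum_le (hT x)
    _ = 2 * (T * (Real.exp (2 * d * π ^ 2 / σ ^ 2) / √((M + 1 : ℕ) : ℝ)) ^ (M + 1)) := by
        rw [hB]
        ring
    _ ≤ _ := by
        gcongr
        exact absorb_constants hT1 hK hM
end
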